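/- Let Σ ⊂ ℂ be a finite set, let O_Σ = ℂ[z, (z−a)⁻¹ : a ∈ Σ], let M be the free O_Σ-module on the set Σ* of words over Σ, and let ∂_z : M → M be the ℂ-linear map with ∂_z(e⊗φ) = e⊗φ′ and ∂_z(wa⊗φ) = wa⊗φ′ + w⊗(φ/(z−a)). Then M is differentially simple: for every nonzero f ∈ M there exists a ℂ-linear endomorphism D of M, lying in the unital subalgebra of endomorphisms of M generated by ∂_z together with the multiplication operators x ↦ q·x for q ∈ O_Σ, such that D f = e⊗1. -/

import Mathlib

/-!
The submodule generated by a nonzero `f` under `∂_z` and multiplication by polynomials is searched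
for an element which is as small as possible: all words have length at most `n`, and as few words
as possible have length exactly `n`. On words of top length `∂_z` acts as the ordinary derivative
(`apply_of_le`). Clearing the denominator of one top coefficient and differentiating repeatedly
turns that coefficient into `1` without enlarging the set of top words. One further application of
`∂_z` kills it, so by minimality the normalised element `h` satisfies `∂_z h = 0`.

If the chosen top word were `v ++ [B]`, the top coefficients `h (v ++ [A])` would be constants
`c A` with `c B = 1`, and the coefficient of `v` in `∂_z h = 0` would exhibit `∑ A, c A / (z - A)` as
the derivative of a rational function. That is impossible, since a derivative has no residues
(`residue_eq_zero`). So the top word is empty and `h = e ⊗ 1`.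
-/

/-- The derivative of a rational function `φ = num/denom`, namely
`φ' = (num'·denom − num·denom')/denom²`. -/
noncomputable def rderiv (f : RatFunc ℂ) : RatFunc ℂ :=
  algebraMap (Polynomial ℂ) (RatFunc ℂ)
      (Polynomial.derivative f.num * f.denom - f.num * Polynomial.derivative f.denom)
    / algebraMap (Polynomial ℂ) (RatFunc ℂ) (f.denom ^ 2)

/-- `O_Σ = ℂ[z, (z−a)⁻¹ : a ∈ Σ]`, the subalgebra of the field of rational
functions generated by `z` and `(z−a)⁻¹` for `a ∈ Σ`. -/
noncomputable def ratO (S : Finset ℂ) : Subalgebra ℂ (RatFunc ℂ) :=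
  Algebra.adjoin ℂ
    (insert RatFunc.X ((fun a : ℂ => (RatFunc.X - RatFunc.C a)⁻¹) '' (S : Set ℂ)))

/-- Words over the alphabet `Σ`. -/
abbrev Word (S : Finset ℂ) := List {a : ℂ // a ∈ S}

/-- The free module on the set of words over `Σ` with rational-function
coefficients; its elements with all coefficients in `O_Σ` form the free
`O_Σ`-module `M` on `Σ*`. -/
abbrev Mdl (S : Finset ℂ) := Word S →₀ RatFunc ℂ

/-- Multiplication by the rational function `q`, as a ℂ-linear endomorphism
of the module of words with rational-function coefficients. -/
noncomputable def mulOp (S : Finset ℂ) (q : RatFunc ℂ) : Mdl S →ₗ[ℂ] Mdl S where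
  toFun x := q • x
  map_add' x y := smul_add q x y
  map_smul' c x := by simpa using smul_comm q c x

/-! ### Derivatives of rational functions -/

open Polynomial in
/-- The quotient rule holds for every representation of `f` as a fraction, not only the reduced one
used to define `rderiv`. -/
lemma rderiv_of_eq_div (f : RatFunc ℂ) (a b : ℂ[X]) (hb : b ≠ 0)
    (hf : f = algebraMap ℂ[X] (RatFunc ℂ) a / algebraMap ℂ[X] (RatFunc ℂ) b) :
    rderiv f = algebraMap ℂ[X] (RatFunc ℂ) (derivative a * b - a * derivative b)
        / algebraMap ℂ[X] (RatFunc ℂ) (b ^ 2) := by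
  have hd : f.denom ≠ 0 := f.denom_ne_zero
  have key : f.num * b = a * f.denom := by
    apply IsFractionRing.injective ℂ[X] (RatFunc ℂ)
    have h := f.num_div_denom.trans hf
    rwa [div_eq_div_iff (RatFunc.algebraMap_ne_zero hd) (RatFunc.algebraMap_ne_zero hb),
      ← map_mul, ← map_mul] at h
  have key' : derivative f.num * b + f.num * derivative b
      = derivative a * f.denom + a * derivative f.denom := by
    rw [← derivative_mul, ← derivative_mul, key]
  have cross : (derivative f.num * f.denom - f.num * derivative f.denom) * b ^ 2
      = (derivative a * b - a * derivative b) * f.denom ^ 2 := by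
    generalize derivative f.num = n' at *
    generalize derivative f.denom = d' at *
    generalize f.num = n at *
    generalize f.denom = d at *
    generalize derivative a = a' at *
    generalize derivative b = b' at *
    linear_combination (d * b) * key' - (b * d' + d * b') * key
  unfold rderiv
  rw [div_eq_div_iff (RatFunc.algebraMap_ne_zero (pow_ne_zero 2 hd))
    (RatFunc.algebraMap_ne_zero (pow_ne_zero 2 hb)), ← map_mul, ← map_mul, cross]

open Polynomial in
lemma rderiv_poly (p : ℂ[X]) :
    rderiv (algebraMap ℂ[X] (RatFunc ℂ) p) = algebraMap ℂ[X] (RatFunc ℂ) (derivative p) := by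
  have h := rderiv_of_eq_div _ p 1 one_ne_zero (by rw [map_one, div_one])
  simpa using h

lemma rderiv_zero : rderiv 0 = 0 := by
  simpa using rderiv_poly 0

open Polynomial in
lemma rderiv_add (f g : RatFunc ℂ) : rderiv (f + g) = rderiv f + rderiv g := by
  have hf : algebraMap ℂ[X] (RatFunc ℂ) f.denom ≠ 0 :=
    RatFunc.algebraMap_ne_zero f.denom_ne_zero
  have hg : algebraMap ℂ[X] (RatFunc ℂ) g.denom ≠ 0 :=
    RatFunc.algebraMap_ne_zero g.denom_ne_zero
  have h : f + g = algebraMap ℂ[X] (RatFunc ℂ) (f.num * g.denom + f.denom * g.num)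
      / algebraMap ℂ[X] (RatFunc ℂ) (f.denom * g.denom) := by
    conv_lhs => rw [← f.num_div_denom, ← g.num_div_denom]
    rw [div_add_div _ _ hf hg]
    simp only [map_mul, map_add]
  rw [rderiv_of_eq_div _ _ _ (mul_ne_zero f.denom_ne_zero g.denom_ne_zero) h]
  unfold rderiv
  simp only [derivative_mul, map_mul, map_add, map_sub, map_pow]
  field_simp
  ring

open Polynomial in
lemma eq_const_of_rderiv_eq_zero (f : RatFunc ℂ) (h : rderiv f = 0) :
    ∃ c : ℂ, f = RatFunc.C c := by
  unfold rderiv at h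
  rw [div_eq_zero_iff, or_iff_left
    (RatFunc.algebraMap_ne_zero (pow_ne_zero 2 f.denom_ne_zero))] at h
  have h1 : derivative f.num * f.denom - f.num * derivative f.denom = 0 :=
    IsFractionRing.injective ℂ[X] (RatFunc ℂ) (by simpa using h)
  have hdvd : f.denom ∣ derivative f.denom :=
    f.isCoprime_num_denom.symm.dvd_of_dvd_mul_left
      ⟨derivative f.num, by linear_combination -h1⟩
  have hd0 : derivative f.denom = 0 := by
    by_contra hne
    have hdeg : f.denom.natDegree ≠ 0 := fun h0 =>
      hne (derivative_of_natDegree_zero h0)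
    exact absurd (natDegree_le_of_dvd hdvd hne) (not_le.2 (natDegree_derivative_lt hdeg))
  have hden : f.denom = 1 :=
    eq_one_of_monic_natDegree_zero f.monic_denom (derivative_eq_zero.1 hd0)
  have hn0 : derivative f.num = 0 := by simpa [hden] using h1
  refine ⟨f.num.coeff 0, ?_⟩
  conv_lhs => rw [← f.num_div_denom, hden,
    eq_C_of_natDegree_eq_zero (derivative_eq_zero.1 hn0)]
  simp

open Polynomial in
/-- The derivative of a rational function has no residues. With `k` the order of the pole of `f`
at `a`, clearing denominators and evaluating at `a` leaves `-k p(a) = 0 ^ k * c * r(a)`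
up to a nonzero factor, where `f = p / ((z - a)^k r)` and `c` is the residue at `a`. If `k = 0` this
gives `c = 0`; if `k > 0` it gives `p(a) = 0`, which is excluded in lowest terms. -/
lemma residue_eq_zero (S : Finset ℂ) (c : {a : ℂ // a ∈ S} → ℂ) (f : RatFunc ℂ)
    (h : rderiv f = ∑ A, RatFunc.C (c A) / (RatFunc.X - RatFunc.C (A : ℂ)))
    (B : {a : ℂ // a ∈ S}) : c B = 0 := by
  classical
  have hX : ∀ a : ℂ, (RatFunc.X - RatFunc.C a : RatFunc ℂ)
      = algebraMap ℂ[X] (RatFunc ℂ) (X - C a) := by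
    intro a; simp
  have hne : ∀ a : ℂ, algebraMap ℂ[X] (RatFunc ℂ) (X - C a) ≠ 0 := fun a =>
    RatFunc.algebraMap_ne_zero (X_sub_C_ne_zero a)
  let Q : ℂ[X] := ∏ A ∈ Finset.univ.erase B, (X - C (A : ℂ))
  -- `R` is `Q` times the sum of the terms with `A ≠ B`.
  let R : ℂ[X] := ∑ A ∈ Finset.univ.erase B, C (c A) *
    ∏ A' ∈ (Finset.univ.erase B).erase A, (X - C (A' : ℂ))
  have hQ : Q.eval (B : ℂ) ≠ 0 := by
    simp only [Q, eval_prod, eval_sub, eval_X, eval_C]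
    refine Finset.prod_ne_zero_iff.2 fun A hA => sub_ne_zero.2 fun e => ?_
    exact (Finset.ne_of_mem_erase hA) (Subtype.ext e.symm)
  have hsum : (∑ A, RatFunc.C (c A) / (RatFunc.X - RatFunc.C (A : ℂ)))
        * algebraMap ℂ[X] (RatFunc ℂ) ((X - C (B : ℂ)) * Q)
      = algebraMap ℂ[X] (RatFunc ℂ) (C (c B) * Q + (X - C (B : ℂ)) * R) := by
    rw [← Finset.add_sum_erase _ _ (Finset.mem_univ B), add_mul, map_add, hX]
    congr 1
    · rw [map_mul, map_mul, RatFunc.algebraMap_C]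
      have := hne B
      field_simp
    · rw [map_mul, map_mul, mul_left_comm]
      congr 1
      rw [map_sum, Finset.sum_mul]
      refine Finset.sum_congr rfl fun A hA => ?_
      have := hne A
      rw [hX, map_mul, RatFunc.algebraMap_C, div_mul_eq_mul_div, div_eq_iff this, mul_assoc]
      congr 1
      rw [← map_mul, mul_comm, Finset.mul_prod_erase _ (fun A' : {a : ℂ // a ∈ S} => X - C (A' : ℂ)) hA]
  have hd := f.denom_ne_zero
  have heq : (derivative f.num * f.denom - f.num * derivative f.denom)
        * ((X - C (B : ℂ)) * Q)
      = (C (c B) * Q + (X - C (B : ℂ)) * R) * f.denom ^ 2 := by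
    apply IsFractionRing.injective ℂ[X] (RatFunc ℂ)
    rw [map_mul, map_mul _ _ (f.denom ^ 2), ← hsum, ← h, rderiv]
    have : algebraMap ℂ[X] (RatFunc ℂ) (f.denom ^ 2) ≠ 0 :=
      RatFunc.algebraMap_ne_zero (pow_ne_zero 2 hd)
    field_simp
  obtain ⟨r, hr, hrdvd⟩ := exists_eq_pow_rootMultiplicity_mul_and_not_dvd f.denom hd (B : ℂ)
  set k := rootMultiplicity (B : ℂ) f.denom
  rw [dvd_iff_isRoot, IsRoot.def] at hrdvd
  have hder : (X - C (B : ℂ)) * derivative f.denom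
      = (X - C (B : ℂ)) ^ k * ((k : ℂ[X]) * r + (X - C (B : ℂ)) * derivative r) := by
    rw [hr]
    rcases k with _ | k
    · simp
    · rw [derivative_mul, derivative_X_sub_C_pow]
      simp
      ring
  have hcancel : ((X - C (B : ℂ)) * (derivative f.num * r - f.num * derivative r)
        - (k : ℂ[X]) * f.num * r) * Q
      = (C (c B) * Q + (X - C (B : ℂ)) * R) * ((X - C (B : ℂ)) ^ k * r ^ 2) := by
    apply mul_left_cancel₀ (pow_ne_zero k (X_sub_C_ne_zero (B : ℂ)))
    have e : (X - C (B : ℂ)) ^ k * ((C (c B) * Q + (X - C (B : ℂ)) * R)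
        * ((X - C (B : ℂ)) ^ k * r ^ 2))
        = (C (c B) * Q + (X - C (B : ℂ)) * R) * f.denom ^ 2 := by
      rw [hr]; ring
    rw [e, ← heq]
    linear_combination f.num * Q * hder - (X - C (B : ℂ)) * derivative f.num * Q * hr
  have hev := congrArg (eval (B : ℂ)) hcancel
  simp at hev
  rcases Nat.eq_zero_or_pos k with hk | hk
  · rw [hk] at hev
    simpa [hQ, hrdvd] using hev
  · exfalso
    -- At a pole the numerator cannot vanish, by coprimality.
    have hnum : f.num.eval (B : ℂ) = 0 := by
      simpa [hQ, hrdvd, hk.ne'] using hev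
    have hden : f.denom.eval (B : ℂ) = 0 := by
      rw [hr]; simp [hk.ne']
    obtain ⟨u, v, huv⟩ := f.isCoprime_num_denom
    have := congrArg (eval (B : ℂ)) huv
    simp [hnum, hden] at this

open Polynomial in
lemma exists_iterate_derivative_eq_C (m : ℕ) : ∀ p : ℂ[X], p ≠ 0 → p.natDegree ≤ m →
    ∃ k : ℕ, ∃ c : ℂ, c ≠ 0 ∧ derivative^[k] p = C c := by
  induction m with
  | zero =>
    intro p hp hm
    have h := eq_C_of_natDegree_eq_zero (Nat.le_zero.1 hm)
    refine ⟨0, p.coeff 0, fun h0 => hp ?_, h⟩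
    rw [h, h0, map_zero]
  | succ m ih =>
    intro p hp hm
    by_cases h0 : p.natDegree = 0
    · exact ih p hp (by omega)
    · have hlt := natDegree_derivative_lt h0
      obtain ⟨k, c, hc, hk⟩ := ih (derivative p)
        (fun h => h0 (derivative_eq_zero.1 h)) (by omega)
      exact ⟨k + 1, c, hc, hk⟩

lemma poly_mem_ratO (S : Finset ℂ) (p : Polynomial ℂ) :
    algebraMap (Polynomial ℂ) (RatFunc ℂ) p ∈ ratO S := by
  have hX : (RatFunc.X : RatFunc ℂ) ∈ ratO S := Algebra.subset_adjoin (Set.mem_insert _ _)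
  induction p using Polynomial.induction_on' with
  | add p q hp hq => rw [map_add]; exact add_mem hp hq
  | monomial n a =>
    rw [← Polynomial.C_mul_X_pow_eq_monomial, map_mul, map_pow, RatFunc.algebraMap_X,
      RatFunc.algebraMap_C]
    exact mul_mem ((ratO S).algebraMap_mem a) (pow_mem hX n)

/-! ### The derivation on words -/

/-- The coefficientwise form of the recursive description of `∂_z`. -/
lemma D_apply (S : Finset ℂ) (D : Module.End ℂ (Mdl S))
    (hD0 : ∀ φ : RatFunc ℂ,
      D (Finsupp.single ([] : Word S) φ) = Finsupp.single ([] : Word S) (rderiv φ))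
    (hD1 : ∀ (w : Word S) (A : {a : ℂ // a ∈ S}) (φ : RatFunc ℂ),
      D (Finsupp.single (w ++ [A]) φ)
        = Finsupp.single (w ++ [A]) (rderiv φ)
          + Finsupp.single w (φ / (RatFunc.X - RatFunc.C (A : ℂ))))
    (g : Mdl S) (u : Word S) :
    D g u = rderiv (g u) + ∑ A : {a : ℂ // a ∈ S}, g (u ++ [A]) / (RatFunc.X - RatFunc.C (A : ℂ)) := by
  classical
  induction g using Finsupp.induction_linear with
  | zero => simp [rderiv_zero]
  | add f g hf hg =>
    simp only [map_add, Finsupp.add_apply, hf, hg, rderiv_add, add_div, Finset.sum_add_distrib]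
    ring
  | single w φ =>
    rcases List.eq_nil_or_concat w with rfl | ⟨w, B, rfl⟩
    · rw [hD0]
      have h : ∀ A : {a : ℂ // a ∈ S}, ([] : Word S) ≠ u ++ [A] := by simp
      by_cases hu : ([] : Word S) = u
      · subst hu; simp
      · simp [hu, rderiv_zero]
    · simp only [List.concat_eq_append]
      rw [hD1, Finsupp.add_apply]
      congr 1
      · by_cases hu : w ++ [B] = u
        · subst hu; simp
        · simp [hu, rderiv_zero]
      · rw [Finset.sum_eq_single B]
        · by_cases hu : w = u
          · subst hu; simp
          · simp [hu]
        · intro A _ hA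
          rw [Finsupp.single_apply, if_neg, zero_div]
          intro e
          have := (List.append_inj' e rfl).2
          simp at this
          exact hA this.symm
        · simp

/-- `g` has no word longer than `n`, and its words of length exactly `n` lie in `T`
(for `T` consisting of words of length `n`). -/
def Bounded (S : Finset ℂ) (n : ℕ) (T : Finset (Word S)) (g : Mdl S) : Prop :=
  ∀ u : Word S, n ≤ u.length → u ∉ T → g u = 0

/-- On words of top length, `∂_z` is the ordinary derivative. -/
lemma apply_of_le {S : Finset ℂ} {D : Module.End ℂ (Mdl S)}
    (hD : ∀ (g : Mdl S) (u : Word S),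
      D g u = rderiv (g u) + ∑ A : {a : ℂ // a ∈ S}, g (u ++ [A]) / (RatFunc.X - RatFunc.C (A : ℂ)))
    {n : ℕ} {T : Finset (Word S)} (hT : ∀ u ∈ T, u.length = n) {g : Mdl S}
    (hg : Bounded S n T g) {u : Word S} (hu : n ≤ u.length) : D g u = rderiv (g u) := by
  rw [hD, Finset.sum_eq_zero, add_zero]
  intro A _
  rw [hg (u ++ [A]) (by simp; omega) (fun h => ?_), zero_div]
  have := hT _ h
  simp at this
  omega

lemma pow_apply_of_le {S : Finset ℂ} {D : Module.End ℂ (Mdl S)}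
    (hD : ∀ (g : Mdl S) (u : Word S),
      D g u = rderiv (g u) + ∑ A : {a : ℂ // a ∈ S}, g (u ++ [A]) / (RatFunc.X - RatFunc.C (A : ℂ)))
    {n : ℕ} {T : Finset (Word S)} (hT : ∀ u ∈ T, u.length = n) {g : Mdl S}
    (hg : Bounded S n T g) (k : ℕ) :
    Bounded S n T ((D ^ k) g) ∧
      ∀ u : Word S, n ≤ u.length → (D ^ k) g u = rderiv^[k] (g u) := by
  induction k with
  | zero => exact ⟨hg, fun u _ => rfl⟩
  | succ k ih =>
    obtain ⟨hb, hk⟩ := ih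
    have e : (D ^ (k + 1)) g = D ((D ^ k) g) := by rw [pow_succ']; rfl
    rw [e]
    refine ⟨fun u hu huT => ?_, fun u hu => ?_⟩
    · rw [apply_of_le hD hT hb hu, hb u hu huT, rderiv_zero]
    · rw [apply_of_le hD hT hb hu, hk u hu, Function.iterate_succ_apply']

lemma iterate_rderiv_poly (p : Polynomial ℂ) (k : ℕ) :
    rderiv^[k] (algebraMap (Polynomial ℂ) (RatFunc ℂ) p)
      = algebraMap (Polynomial ℂ) (RatFunc ℂ) (Polynomial.derivative^[k] p) := by
  induction k with
  | zero => rfl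
  | succ k ih => rw [Function.iterate_succ_apply', ih, rderiv_poly, Function.iterate_succ_apply']

/-- A horizontal element whose coefficient at a word `w` of top length is `1` equals `e ⊗ 1`:
a last letter of `w` would produce a nonzero residue in a derivative. -/
lemma eq_single_of_D_eq_zero {S : Finset ℂ} {D : Module.End ℂ (Mdl S)}
    (hD : ∀ (g : Mdl S) (u : Word S),
      D g u = rderiv (g u) + ∑ A : {a : ℂ // a ∈ S}, g (u ++ [A]) / (RatFunc.X - RatFunc.C (A : ℂ)))
    {n : ℕ} {T : Finset (Word S)} (hT : ∀ u ∈ T, u.length = n) {h : Mdl S}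
    (hh : Bounded S n T h) {w : Word S} (hw : w.length = n) (hw1 : h w = 1) (h0 : D h = 0) :
    h = Finsupp.single ([] : Word S) 1 := by
  rcases List.eq_nil_or_concat w with rfl | ⟨v, B, rfl⟩
  · ext1 u
    by_cases hu : u = []
    · subst hu; simpa using hw1
    · rw [Finsupp.single_apply, if_neg (Ne.symm hu)]
      refine hh u (by simp at hw; omega) fun huT => hu ?_
      have := hT u huT
      rw [← hw] at this
      simpa using this
  · exfalso
    simp only [List.concat_eq_append] at hw hw1
    have hc : ∀ A, ∃ c : ℂ, h (v ++ [A]) = RatFunc.C c := fun A => by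
      apply eq_const_of_rderiv_eq_zero
      rw [← apply_of_le hD hT hh (u := v ++ [A]) (by simp at hw ⊢; omega), h0]
      rfl
    choose c hc using hc
    have hv := hD h v
    rw [h0] at hv
    simp only [hc] at hv
    have hB := residue_eq_zero S (fun A => -c A) (h v) (by
      refine (eq_neg_of_add_eq_zero_left hv.symm).trans ?_
      rw [← Finset.sum_neg_distrib]
      refine Finset.sum_congr rfl fun A _ => ?_
      rw [map_neg]
      exact (neg_div _ _).symm) B
    rw [hc B, neg_eq_zero.1 hB] at hw1
    simp at hw1

/-! ### Reduction to `e ⊗ 1` -/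

/-- The induction on the number of top words. The hypothesis `base` covers elements all of
whose words are shorter than `n`. -/
lemma exists_op_of_base {S : Finset ℂ} {D : Module.End ℂ (Mdl S)}
    (hD : ∀ (g : Mdl S) (u : Word S),
      D g u = rderiv (g u) + ∑ A : {a : ℂ // a ∈ S}, g (u ++ [A]) / (RatFunc.X - RatFunc.C (A : ℂ)))
    (U : Subalgebra ℂ (Module.End ℂ (Mdl S))) (hDU : D ∈ U)
    (hU : ∀ p : Polynomial ℂ, mulOp S (algebraMap (Polynomial ℂ) (RatFunc ℂ) p) ∈ U)
    (n : ℕ)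
    (base : ∀ g : Mdl S, g ≠ 0 → Bounded S n ∅ g →
        ∃ D' ∈ U, D' g = Finsupp.single ([] : Word S) (1 : RatFunc ℂ))
    (T : Finset (Word S)) : (∀ u ∈ T, u.length = n) →
      ∀ g : Mdl S, g ≠ 0 → Bounded S n T g →
        ∃ D' ∈ U, D' g = Finsupp.single ([] : Word S) (1 : RatFunc ℂ) := by
  classical
  induction T using Finset.induction_on with
  | empty => exact fun _ => base
  | insert w T hwT ih =>
    intro hT g hg0 hg
    have hT' : ∀ u ∈ T, u.length = n := fun u hu => hT u (Finset.mem_insert_of_mem hu)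
    have hw : w.length = n := hT w (Finset.mem_insert_self _ _)
    have shrink : ∀ x : Mdl S, Bounded S n (insert w T) x → x w = 0 → Bounded S n T x := by
      intro x hx hxw u hu huT
      by_cases e : u = w
      · rw [e, hxw]
      · exact hx u hu (by simp [e, huT])
    by_cases hgw : g w = 0
    · exact ih hT' g hg0 (shrink g hg hgw)
    obtain ⟨k, c, hc, hk⟩ := exists_iterate_derivative_eq_C _ (g w).num
      (RatFunc.num_ne_zero hgw) le_rfl
    -- Multiplying by `c⁻¹ * denom (g w)` and differentiating `k` times turns `g w` into `1`.
    let p : Polynomial ℂ := (g w).denom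
    let P : Module.End ℂ (Mdl S) :=
      c⁻¹ • (D ^ k * mulOp S (algebraMap (Polynomial ℂ) (RatFunc ℂ) p))
    have hP : P ∈ U := U.smul_mem (mul_mem (pow_mem hDU k) (hU p)) _
    have hm : ∀ u, mulOp S (algebraMap (Polynomial ℂ) (RatFunc ℂ) p) g u
        = algebraMap (Polynomial ℂ) (RatFunc ℂ) p * g u := fun u => rfl
    have hmb : Bounded S n (insert w T) (mulOp S (algebraMap (Polynomial ℂ) (RatFunc ℂ) p) g) := by
      intro u hu huT
      rw [hm, hg u hu huT, mul_zero]
    obtain ⟨hb, happ⟩ := pow_apply_of_le hD hT hmb k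
    have hPg : ∀ u, P g u
        = c⁻¹ • (D ^ k) (mulOp S (algebraMap (Polynomial ℂ) (RatFunc ℂ) p) g) u := fun u => rfl
    have hPb : Bounded S n (insert w T) (P g) := by
      intro u hu huT
      rw [hPg, hb u hu huT, smul_zero]
    have hPw : P g w = 1 := by
      have hnum : algebraMap (Polynomial ℂ) (RatFunc ℂ) p * g w
          = algebraMap (Polynomial ℂ) (RatFunc ℂ) (g w).num := by
        have h1 := (g w).num_div_denom
        rw [div_eq_iff (RatFunc.algebraMap_ne_zero (g w).denom_ne_zero)] at h1
        rw [h1, mul_comm]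
      rw [hPg, happ w hw.ge, hm, hnum, iterate_rderiv_poly, hk, RatFunc.algebraMap_C,
        RatFunc.smul_eq_C_mul, ← map_mul, inv_mul_cancel₀ hc, map_one]
    by_cases h0 : D (P g) = 0
    · exact ⟨P, hP, eq_single_of_D_eq_zero hD hT hPb hw hPw h0⟩
    have hDb : Bounded S n T (D (P g)) := by
      refine shrink _ (fun u hu huT => ?_) ?_
      · rw [apply_of_le hD hT hPb hu, hPb u hu huT, rderiv_zero]
      · rw [apply_of_le hD hT hPb hw.ge, hPw]
        simpa using rderiv_poly 1
    obtain ⟨E, hE, hE1⟩ := ih hT' _ h0 hDb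
    exact ⟨E * (D * P), mul_mem hE (mul_mem hDU hP), hE1⟩

/-- Induction on the strict bound `n` for the length of words; the bound `0` forces `g = 0`. -/
lemma exists_op {S : Finset ℂ} {D : Module.End ℂ (Mdl S)}
    (hD : ∀ (g : Mdl S) (u : Word S),
      D g u = rderiv (g u) + ∑ A : {a : ℂ // a ∈ S}, g (u ++ [A]) / (RatFunc.X - RatFunc.C (A : ℂ)))
    (U : Subalgebra ℂ (Module.End ℂ (Mdl S))) (hDU : D ∈ U)
    (hU : ∀ p : Polynomial ℂ, mulOp S (algebraMap (Polynomial ℂ) (RatFunc ℂ) p) ∈ U)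
    (n : ℕ) : ∀ g : Mdl S, g ≠ 0 → Bounded S n ∅ g →
        ∃ D' ∈ U, D' g = Finsupp.single ([] : Word S) (1 : RatFunc ℂ) := by
  classical
  induction n with
  | zero =>
    intro g hg0 hg
    exact absurd (Finsupp.ext fun u => hg u (Nat.zero_le _) (Finset.notMem_empty u)) hg0
  | succ n ih =>
    intro g hg0 hg
    refine exists_op_of_base hD U hDU hU n ih (g.support.filter fun u => u.length = n)
      (fun u hu => (Finset.mem_filter.1 hu).2) g hg0 fun u hu huT => ?_
    by_cases e : u.length = n
    · by_contra hne
      exact huT (Finset.mem_filter.2 ⟨Finsupp.mem_support_iff.2 hne, e⟩)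
    · exact hg u (by omega) (Finset.notMem_empty u)

/-- **`M` is differentially simple** (formal model of F. Brown's structure
theorem, part (3)): for every nonzero `f ∈ M` (coefficients in `O_Σ`) there
is an operator `D'` in the unital subalgebra of `End_ℂ(M)` generated by
`∂_z` and the multiplications by elements `q ∈ O_Σ` with `D' f = e⊗1`. -/
theorem differentially_simple
    (S : Finset ℂ) (D : Module.End ℂ (Mdl S))
    (hD0 : ∀ φ : RatFunc ℂ,
      D (Finsupp.single ([] : Word S) φ) = Finsupp.single ([] : Word S) (rderiv φ))
    (hD1 : ∀ (w : Word S) (A : {a : ℂ // a ∈ S}) (φ : RatFunc ℂ),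
      D (Finsupp.single (w ++ [A]) φ)
        = Finsupp.single (w ++ [A]) (rderiv φ)
          + Finsupp.single w (φ / (RatFunc.X - RatFunc.C (A : ℂ)))) :
    ∀ f : Mdl S, (∀ w : Word S, f w ∈ ratO S) → f ≠ 0 →
      ∃ D' ∈ Algebra.adjoin ℂ
          ({D} ∪ {L : Module.End ℂ (Mdl S) | ∃ q ∈ ratO S, L = mulOp S q}),
        D' f = Finsupp.single ([] : Word S) (1 : RatFunc ℂ) := by
  intro f _ hf
  refine exists_op (D_apply S D hD0 hD1) _ (Algebra.subset_adjoin (Or.inl rfl))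
    (fun p => Algebra.subset_adjoin (Or.inr ⟨_, poly_mem_ratO S p, rfl⟩))
    (f.support.sup List.length + 1) f hf fun u hu _ => ?_
  by_contra hne
  have : u.length ≤ f.support.sup List.length :=
    Finset.le_sup (f := List.length) (Finsupp.mem_support_iff.2 hne)
  omega
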